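/- arXiv:1901.03361 — 3 statements merged into one kernel-verified Lean document; each statement's English description precedes it below -/
import Mathlib

section
/- Let D be a lattice of languages closed under concatenation, let L, L' ∈ D, and let K, K' be Bool(D)-covers of L and L' respectively. Then there exists a Bool(D)-cover H of the concatenation LL' such that for every H ∈ H there exist K ∈ K and K' ∈ K' with H ⊆ KK'. -/
open Set

namespace Paper

abbrev Lang (A : Type) := Set (List A)
abbrev LClass (A : Type) := Set (Set (List A))

variable {A R M : Type}

/-- A lattice of languages: contains `∅` and `A*`, closed under finite union
and finite intersection. -/
def LangLattice (𝒞 : LClass A) : Prop :=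
  (∅ : Lang A) ∈ 𝒞 ∧ (Set.univ : Lang A) ∈ 𝒞 ∧
    (∀ K L : Lang A, K ∈ 𝒞 → L ∈ 𝒞 → K ∪ L ∈ 𝒞) ∧
    (∀ K L : Lang A, K ∈ 𝒞 → L ∈ 𝒞 → K ∩ L ∈ 𝒞)

/-- A Boolean algebra of languages: a lattice closed under complement. -/
def LangBoolAlg (𝒞 : LClass A) : Prop :=
  LangLattice 𝒞 ∧ ∀ L : Lang A, L ∈ 𝒞 → Lᶜ ∈ 𝒞

/-- A class is quotient-closed when it is closed under left and right quotients
by words. -/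
def QuotientClosed (𝒞 : LClass A) : Prop :=
  ∀ L ∈ 𝒞, ∀ w : List A,
    {u : List A | w ++ u ∈ L} ∈ 𝒞 ∧ {u : List A | u ++ w ∈ L} ∈ 𝒞

/-- The canonical preorder `≤_𝒞` associated with a class `𝒞`. -/
def cle (𝒞 : LClass A) (w w' : List A) : Prop := ∀ L ∈ 𝒞, w ∈ L → w' ∈ L

/-- The canonical equivalence `∼_𝒞` associated with a class `𝒞`. -/
def ceq (𝒞 : LClass A) (w w' : List A) : Prop := ∀ L ∈ 𝒞, (w ∈ L ↔ w' ∈ L)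

/-- The `∼_𝒞`-class of the word `w`. -/
def cclass (𝒞 : LClass A) (w : List A) : Lang A := {v | ceq 𝒞 w v}

/-- `D` is a `∼_𝒞`-class. -/
def IsCClass (𝒞 : LClass A) (D : Lang A) : Prop := ∃ w : List A, D = cclass 𝒞 w

/-- Multiplication of `∼_𝒞`-classes (the class of the concatenation of
representatives). -/
def cmul (𝒞 : LClass A) (D E : Lang A) : Lang A :=
  {x | ∃ u ∈ D, ∃ v ∈ E, ceq 𝒞 (u ++ v) x}

/-- Language concatenation. -/
def cat (K L : Lang A) : Lang A := {w | ∃ u ∈ K, ∃ v ∈ L, u ++ v = w}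

/-- Marked concatenation `K a L`. -/
def mcat (K : Lang A) (a : A) (L : Lang A) : Lang A :=
  {w | ∃ u ∈ K, ∃ v ∈ L, u ++ a :: v = w}

/-- Boolean closure: the least Boolean algebra containing `𝒞`. -/
def BoolC (𝒞 : LClass A) : LClass A := ⋂₀ {𝒟 : LClass A | LangBoolAlg 𝒟 ∧ 𝒞 ⊆ 𝒟}

/-- Polynomial closure: the least class containing `𝒞` closed under union and
marked concatenation. -/
def PolC (𝒞 : LClass A) : LClass A :=
  ⋂₀ {𝒟 : LClass A | 𝒞 ⊆ 𝒟 ∧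
    (∀ K L : Lang A, K ∈ 𝒟 → L ∈ 𝒟 → K ∪ L ∈ 𝒟) ∧
    (∀ (K L : Lang A) (a : A), K ∈ 𝒟 → L ∈ 𝒟 → mcat K a L ∈ 𝒟)}

/-- A cover of `L`: a finite set of languages whose union includes `L`. -/
def IsCover (Ks : LClass A) (L : Lang A) : Prop := Ks.Finite ∧ L ⊆ ⋃₀ Ks

/-- A `𝒞`-cover of `L`: a cover all of whose members belong to `𝒞`. -/
def IsCCover (𝒞 Ks : LClass A) (L : Lang A) : Prop := IsCover Ks L ∧ Ks ⊆ 𝒞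

/-- `α : A* → M` is a monoid morphism. -/
def IsMonoidMorphism [Monoid M] (α : List A → M) : Prop :=
  α [] = 1 ∧ ∀ u v : List A, α (u ++ v) = α u * α v

/-- `α` recognizes `L`. -/
def Recognizes [Monoid M] (α : List A → M) (L : Lang A) : Prop :=
  ∃ F : Set M, L = α ⁻¹' F

/-- A language is regular when it is recognized by a monoid morphism into a
finite monoid. -/
def RegularLang (L : Lang A) : Prop :=
  ∃ (N : Type) (_ : Monoid N) (_ : Finite N) (α : List A → N),
    IsMonoidMorphism α ∧ Recognizes α L

/-- The canonical order on a rating set: `r ≤ s` iff `r + s = s`. -/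
def rle [Add R] (r s : R) : Prop := r + s = s

/-- A rating map: maps `∅` to `0` and commutes with binary union. -/
def IsRatingMap [AddCommMonoid R] (ρ : Lang A → R) : Prop :=
  ρ ∅ = 0 ∧ ∀ K L : Lang A, ρ (K ∪ L) = ρ K + ρ L

/-- A nice rating map: the value of any language is a finite sum of values of
its words. -/
def IsNice [AddCommMonoid R] (ρ : Lang A → R) : Prop :=
  ∀ K : Lang A, ∃ l : List (List A), (∀ w ∈ l, w ∈ K) ∧
    ρ K = (l.map fun w => ρ {w}).sum

/-- A multiplicative rating map: also a morphism for concatenation. -/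
def IsMultiplicative [Semiring R] (ρ : Lang A → R) : Prop :=
  ρ ({[]} : Lang A) = 1 ∧ ∀ K L : Lang A, ρ (cat K L) = ρ K * ρ L

/-- An endomorphism of the additive monoid `(R, +)`. -/
def IsAddEndo [AddCommMonoid R] (γ : R → R) : Prop :=
  γ 0 = 0 ∧ ∀ r s : R, γ (r + s) = γ r + γ s

/-- A quasi-multiplicative rating map for the endomorphism `γ`. -/
def IsQuasiMult [Semiring R] (ρ : Lang A → R) (γ : R → R) : Prop :=
  IsAddEndo γ ∧ (∀ q r s : R, γ (q * γ r * s) = γ (q * r * s)) ∧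
    ∀ K L : Lang A, ρ (cat K L) = γ (ρ K * ρ L)

/-- The `ρ`-imprint of a set of languages. -/
def imprint [Add R] (ρ : Lang A → R) (Ks : LClass A) : Set R :=
  {r | ∃ K ∈ Ks, rle r (ρ K)}

/-- The `𝒟`-optimal `ρ`-imprint on `L` (the imprint of any optimal `𝒟`-cover
of `L`, i.e. the intersection of the imprints of all `𝒟`-covers of `L`). -/
def optImprint [Add R] (𝒟 : LClass A) (ρ : Lang A → R) (L : Lang A) : Set R :=
  {r | ∀ Ks : LClass A, IsCCover 𝒟 Ks L → r ∈ imprint ρ Ks}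

/-- Downset operation on subsets of a rating set. -/
def dclos [Add R] (U : Set R) : Set R := {r | ∃ s ∈ U, rle r s}

/-- Pointwise multiplication of subsets of a rating set. -/
def smul [Mul R] (U V : Set R) : Set R := {x | ∃ u ∈ U, ∃ v ∈ V, u * v = x}

/-!
Choose finite subsets `F` and `F'` of the given class, containing `L` and `L'`, such that every
member of the two covers is a union of `∼_F`-classes, respectively of `∼_F'`-classes. Let `G`
consist of the finitely many languages `↑u ↑v` with `u ∈ L` and `v ∈ L'`, where `↑` is the principal
upper set for `≤_F`, respectively `≤_F'`. The cover of `LL'` is made of the `∼_G`-classes of its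
words. To see that the class of `w` lies in some `KK'`, take a factorization `w = uv` with `u ∈ L`,
`v ∈ L'` that is maximal for `≤_F × ≤_F'`. If `x ∼_G w`, then `x ∈ ↑u ↑v`, say `x = u₁v₁`, and
`w ∈ ↑u₁ ↑v₁` in turn; so `w` has a factorization above `(u₁, v₁)`, which is itself above `(u, v)`,
and maximality forces `u₁ ∼_F u` and `v₁ ∼_F' v`.
-/

section BooleanClosure

theorem LangLattice.infClosed {𝒞 : LClass A} (h : LangLattice 𝒞) : InfClosed 𝒞 :=
  fun K hK L hL => h.2.2.2 K L hK hL

theorem langBoolAlg_boolC (𝒞 : LClass A) : LangBoolAlg (BoolC 𝒞) :=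
  ⟨⟨fun _ hℬ => hℬ.1.1.1, fun _ hℬ => hℬ.1.1.2.1,
    fun K L hK hL ℬ hℬ => hℬ.1.1.2.2.1 K L (hK ℬ hℬ) (hL ℬ hℬ),
    fun K L hK hL ℬ hℬ => hℬ.1.1.2.2.2 K L (hK ℬ hℬ) (hL ℬ hℬ)⟩,
    fun L hL ℬ hℬ => hℬ.1.2 L (hL ℬ hℬ)⟩

theorem subset_boolC (𝒞 : LClass A) : 𝒞 ⊆ BoolC 𝒞 :=
  fun _ hL _ hℬ => hℬ.2 hL

theorem boolC_subset {𝒞 ℬ : LClass A} (hℬ : LangBoolAlg ℬ) (h𝒞 : 𝒞 ⊆ ℬ) : BoolC 𝒞 ⊆ ℬ :=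
  sInter_subset_of_mem ⟨hℬ, h𝒞⟩

end BooleanClosure

section CanonicalPreorder

variable {F 𝒟 ℬ : LClass A} {u v w : List A}

theorem cle_refl (F : LClass A) (u : List A) : cle F u u :=
  fun _ _ => id

theorem cle.trans (huv : cle F u v) (hvw : cle F v w) : cle F u w :=
  fun P hP => hvw P hP ∘ huv P hP

theorem ceq_of_cle_of_cle (huv : cle F u v) (hvu : cle F v u) : ceq F u v :=
  fun P hP => ⟨huv P hP, hvu P hP⟩

theorem ceq.mono {G : LClass A} (hFG : F ⊆ G) (h : ceq G u v) : ceq F u v :=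
  fun P hP => h P (hFG hP)

theorem mem_cclass_self (F : LClass A) (w : List A) : w ∈ cclass F w :=
  fun _ _ => Iff.rfl

/-- The members of `F` that contain `w`. The preorder `≤_F` compares traces by inclusion. -/
def trace (F : LClass A) (w : List A) : LClass A := {P ∈ F | w ∈ P}

theorem trace_subset_trace_iff : trace F u ⊆ trace F v ↔ cle F u v :=
  ⟨fun h _ hP hu => (h ⟨hP, hu⟩).2, fun h _ hP => ⟨hP.1, h _ hP.1 hP.2⟩⟩

theorem trace_eq_trace_iff : trace F u = trace F v ↔ ceq F u v := by
  simp only [Subset.antisymm_iff, trace_subset_trace_iff]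
  exact ⟨fun h => ceq_of_cle_of_cle h.1 h.2,
    fun h => ⟨fun P hP => (h P hP).1, fun P hP => (h P hP).2⟩⟩

theorem trace_subset (F : LClass A) (w : List A) : trace F w ⊆ F :=
  sep_subset F _

/-- The principal upper set `↑w` of the canonical preorder `≤_F`. -/
def upperClass (F : LClass A) (w : List A) : Lang A := {v | cle F w v}

theorem upperClass_eq_sInter_trace (F : LClass A) (w : List A) :
    upperClass F w = ⋂₀ trace F w := by
  ext v
  simp only [upperClass, cle, trace, mem_ofPred_eq, mem_sInter, and_imp]

theorem finite_range_upperClass (hF : F.Finite) : (range (upperClass F)).Finite := by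
  refine (hF.powerset.image sInter).subset (range_subset_iff.2 fun w => ?_)
  exact ⟨trace F w, trace_subset F w, (upperClass_eq_sInter_trace F w).symm⟩

theorem upperClass_mem (h𝒟 : InfClosed 𝒟) (hF : F.Finite) (hF𝒟 : F ⊆ 𝒟)
    {L : Lang A} (hL : L ∈ F) (hw : w ∈ L) : upperClass F w ∈ 𝒟 := by
  rw [upperClass_eq_sInter_trace]
  exact h𝒟.sInf_mem_of_nonempty (hF.subset (trace_subset F w)) ⟨L, hL, hw⟩
    ((trace_subset F w).trans hF𝒟)

theorem finite_range_cclass (hF : F.Finite) : (range (cclass F)).Finite := by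
  refine (hF.powerset.image fun t => {v | t = trace F v}).subset (range_subset_iff.2 fun w => ?_)
  exact ⟨trace F w, trace_subset F w, ext fun _ => trace_eq_trace_iff⟩

theorem cclass_eq_biInter (F : LClass A) (w : List A) :
    cclass F w = ⋂ P ∈ F, {v | w ∈ P ↔ v ∈ P} := by
  ext v
  simp only [cclass, ceq, mem_ofPred_eq, mem_iInter]

theorem cclass_mem (hℬ : LangBoolAlg ℬ) (hF : F.Finite) (hFℬ : F ⊆ ℬ) (w : List A) :
    cclass F w ∈ ℬ := by
  rw [cclass_eq_biInter]
  refine hℬ.1.infClosed.biInf_mem hF hℬ.1.2.1 fun P hP => ?_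
  by_cases hw : w ∈ P
  · simpa only [hw, true_iff, ofPred_mem_eq] using hFℬ hP
  · simpa only [hw, false_iff, ← compl_def] using hℬ.2 P (hFℬ hP)

end CanonicalPreorder

section Saturation

variable {F G 𝒟 : LClass A} {K : Lang A}

/-- `K` is a union of `∼_F`-classes; for finite `F`, this says that `K` lies in `Bool(F)`. -/
def IsSaturated (F : LClass A) (K : Lang A) : Prop :=
  ∀ u v : List A, ceq F u v → (u ∈ K ↔ v ∈ K)

theorem IsSaturated.mono (h : IsSaturated F K) (hFG : F ⊆ G) : IsSaturated G K :=
  fun u v huv => h u v (huv.mono hFG)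

theorem IsSaturated.cclass_subset (h : IsSaturated F K) {u : List A} (hu : u ∈ K) :
    cclass F u ⊆ K :=
  fun v huv => (h u v huv).1 hu

theorem langBoolAlg_isSaturated (F : LClass A) : LangBoolAlg {K | IsSaturated F K} :=
  ⟨⟨fun _ _ _ => Iff.rfl, fun _ _ _ => Iff.rfl,
    fun _ _ hK hL u v huv => or_congr (hK u v huv) (hL u v huv),
    fun _ _ hK hL u v huv => and_congr (hK u v huv) (hL u v huv)⟩,
    fun _ hK u v huv => not_congr (hK u v huv)⟩

theorem langBoolAlg_exists_finite_isSaturated (𝒟 : LClass A) :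
    LangBoolAlg {K | ∃ F : LClass A, F.Finite ∧ F ⊆ 𝒟 ∧ IsSaturated F K} := by
  refine ⟨⟨?empty, ?univ, ?union, ?inter⟩, ?compl⟩
  case empty => exact ⟨∅, finite_empty, empty_subset 𝒟, (langBoolAlg_isSaturated ∅).1.1⟩
  case univ => exact ⟨∅, finite_empty, empty_subset 𝒟, (langBoolAlg_isSaturated ∅).1.2.1⟩
  case union =>
    rintro K L ⟨F, hF, hF𝒟, hK⟩ ⟨G, hG, hG𝒟, hL⟩
    exact ⟨F ∪ G, hF.union hG, union_subset hF𝒟 hG𝒟, (langBoolAlg_isSaturated _).1.2.2.1 K L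
      (hK.mono subset_union_left) (hL.mono subset_union_right)⟩
  case inter =>
    rintro K L ⟨F, hF, hF𝒟, hK⟩ ⟨G, hG, hG𝒟, hL⟩
    exact ⟨F ∪ G, hF.union hG, union_subset hF𝒟 hG𝒟, (langBoolAlg_isSaturated _).1.2.2.2 K L
      (hK.mono subset_union_left) (hL.mono subset_union_right)⟩
  case compl =>
    rintro K ⟨F, hF, hF𝒟, hK⟩
    exact ⟨F, hF, hF𝒟, (langBoolAlg_isSaturated F).2 K hK⟩

theorem exists_finite_isSaturated (hK : K ∈ BoolC 𝒟) :
    ∃ F : LClass A, F.Finite ∧ F ⊆ 𝒟 ∧ IsSaturated F K :=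
  boolC_subset (langBoolAlg_exists_finite_isSaturated 𝒟)
    (fun P hP => ⟨{P}, finite_singleton P, singleton_subset_iff.2 hP, fun _ _ h => h P rfl⟩) hK

theorem exists_finite_forall_isSaturated {Ks : LClass A} (hfin : Ks.Finite) (hKs : Ks ⊆ BoolC 𝒟) :
    ∃ F : LClass A, F.Finite ∧ F ⊆ 𝒟 ∧ ∀ K ∈ Ks, IsSaturated F K := by
  choose! F hF hF𝒟 hsat using fun K (hK : K ∈ Ks) => exists_finite_isSaturated (hKs hK)
  exact ⟨⋃ K ∈ Ks, F K, hfin.biUnion hF, iUnion₂_subset hF𝒟,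
    fun K hK => (hsat K hK).mono (subset_biUnion_of_mem (u := F) hK)⟩

theorem IsCCover.exists_finite_forall_cclass_subset {Ks : LClass A} {L : Lang A}
    (hKs : IsCCover (BoolC 𝒟) Ks L) (hL : L ∈ 𝒟) :
    ∃ F : LClass A, F.Finite ∧ F ⊆ 𝒟 ∧ L ∈ F ∧ ∀ u ∈ L, ∃ K ∈ Ks, cclass F u ⊆ K := by
  obtain ⟨F, hF, hF𝒟, hsat⟩ := exists_finite_forall_isSaturated hKs.1.1 hKs.2
  refine ⟨insert L F, hF.insert L, insert_subset hL hF𝒟, mem_insert L F, fun u hu => ?_⟩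
  obtain ⟨K, hK, huK⟩ := hKs.1.2 hu
  exact ⟨K, hK, ((hsat K hK).mono (subset_insert L F)).cclass_subset huK⟩

end Saturation

section Concatenation

variable {F F' 𝒟 𝒟' ℬ : LClass A} {L L' : Lang A} {w : List A}

theorem append_mem_cat {u v : List A} (hu : u ∈ L) (hv : v ∈ L') : u ++ v ∈ cat L L' :=
  ⟨u, hu, v, hv, rfl⟩

theorem cat_subset_cat {K K' : Lang A} (h : L ⊆ K) (h' : L' ⊆ K') : cat L L' ⊆ cat K K' := by
  rintro _ ⟨u, hu, v, hv, rfl⟩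
  exact append_mem_cat (h hu) (h' hv)

theorem finite_setOf_append_eq (w : List A) : {p : List A × List A | p.1 ++ p.2 = w}.Finite := by
  refine ((finite_le_nat w.length).image fun n => (w.take n, w.drop n)).subset ?_
  rintro ⟨u, v⟩ rfl
  exact ⟨u.length, by simp, by simp⟩

theorem exists_maximal_append_eq (F F' : LClass A) (hw : w ∈ cat L L') :
    ∃ u ∈ L, ∃ v ∈ L', u ++ v = w ∧ ∀ u₁ ∈ L, ∀ v₁ ∈ L', u₁ ++ v₁ = w →
      cle F u u₁ → cle F' v v₁ → cle F u₁ u ∧ cle F' v₁ v := by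
  let S : Set (List A × List A) := {p | p.1 ++ p.2 = w ∧ p.1 ∈ L ∧ p.2 ∈ L'}
  have hS : S.Finite := (finite_setOf_append_eq w).subset fun p hp => hp.1
  have hne : S.Nonempty := by
    obtain ⟨u, hu, v, hv, huv⟩ := hw
    exact ⟨(u, v), huv, hu, hv⟩
  obtain ⟨⟨u, v⟩, ⟨huv, hu, hv⟩, hmax⟩ :=
    hS.exists_maximalFor (fun p => (trace F p.1, trace F' p.2)) S hne
  refine ⟨u, hu, v, hv, huv, fun u₁ hu₁ v₁ hv₁ huv₁ hle hle' => ?_⟩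
  have hge := hmax (j := (u₁, v₁)) ⟨huv₁, hu₁, hv₁⟩
    ⟨trace_subset_trace_iff.2 hle, trace_subset_trace_iff.2 hle'⟩
  exact ⟨trace_subset_trace_iff.1 hge.1, trace_subset_trace_iff.1 hge.2⟩

/-- The languages `↑u ↑v` for `u ∈ L` and `v ∈ L'`, with upper sets taken for `≤_F` and `≤_F'`
respectively. The classes of the equivalence they induce form the cover of `LL'` in the proof. -/
def upperCats (F F' : LClass A) (L L' : Lang A) : LClass A :=
  image2 cat (upperClass F '' L) (upperClass F' '' L')

theorem cat_upperClass_mem_upperCats {u v : List A} (hu : u ∈ L) (hv : v ∈ L') :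
    cat (upperClass F u) (upperClass F' v) ∈ upperCats F F' L L' :=
  mem_image2_of_mem (mem_image_of_mem _ hu) (mem_image_of_mem _ hv)

theorem finite_upperCats (hF : F.Finite) (hF' : F'.Finite) (L L' : Lang A) :
    (upperCats F F' L L').Finite :=
  ((finite_range_upperClass hF).subset (image_subset_range _ _)).image2 _
    ((finite_range_upperClass hF').subset (image_subset_range _ _))

theorem upperCats_subset (h𝒟 : InfClosed 𝒟) (h𝒟' : InfClosed 𝒟')
    (hcat : ∀ K ∈ 𝒟, ∀ K' ∈ 𝒟', cat K K' ∈ ℬ) (hF : F.Finite) (hF' : F'.Finite)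
    (hF𝒟 : F ⊆ 𝒟) (hF𝒟' : F' ⊆ 𝒟') (hL : L ∈ F) (hL' : L' ∈ F') :
    upperCats F F' L L' ⊆ ℬ := by
  rintro _ ⟨_, ⟨u, hu, rfl⟩, _, ⟨v, hv, rfl⟩, rfl⟩
  exact hcat _ (upperClass_mem h𝒟 hF hF𝒟 hL hu) _ (upperClass_mem h𝒟' hF' hF𝒟' hL' hv)

theorem exists_cclass_upperCats_subset_cat (hL : L ∈ F) (hL' : L' ∈ F') (hw : w ∈ cat L L') :
    ∃ u ∈ L, ∃ v ∈ L', cclass (upperCats F F' L L') w ⊆ cat (cclass F u) (cclass F' v) := by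
  obtain ⟨u, hu, v, hv, rfl, hmax⟩ := exists_maximal_append_eq F F' hw
  refine ⟨u, hu, v, hv, fun x hx => ?_⟩
  obtain ⟨u₁, huu₁, v₁, hvv₁, rfl⟩ : x ∈ cat (upperClass F u) (upperClass F' v) :=
    (hx _ (cat_upperClass_mem_upperCats hu hv)).1 (append_mem_cat (cle_refl F u) (cle_refl F' v))
  have hu₁ : u₁ ∈ L := huu₁ L hL hu
  have hv₁ : v₁ ∈ L' := hvv₁ L' hL' hv
  obtain ⟨u₂, hu₁u₂, v₂, hv₁v₂, huv₂⟩ : u ++ v ∈ cat (upperClass F u₁) (upperClass F' v₁) :=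
    (hx _ (cat_upperClass_mem_upperCats hu₁ hv₁)).2
      (append_mem_cat (cle_refl F u₁) (cle_refl F' v₁))
  obtain ⟨hu₂u, hv₂v⟩ := hmax u₂ (hu₁u₂ L hL hu₁) v₂ (hv₁v₂ L' hL' hv₁) huv₂
    (huu₁.trans hu₁u₂) (hvv₁.trans hv₁v₂)
  exact append_mem_cat (ceq_of_cle_of_cle huu₁ (hu₁u₂.trans hu₂u))
    (ceq_of_cle_of_cle hvv₁ (hv₁v₂.trans hv₂v))

theorem isCCover_cclass_image {G : LClass A} (hℬ : LangBoolAlg ℬ) (hG : G.Finite) (hGℬ : G ⊆ ℬ)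
    (L : Lang A) : IsCCover ℬ (cclass G '' L) L :=
  ⟨⟨(finite_range_cclass hG).subset (image_subset_range _ _),
    fun w hw => ⟨cclass G w, mem_image_of_mem _ hw, mem_cclass_self G w⟩⟩,
    image_subset_iff.2 fun w _ => cclass_mem hℬ hG hGℬ w⟩

theorem statement7_general (h𝒟 : InfClosed 𝒟) (h𝒟' : InfClosed 𝒟') (hℬ : LangBoolAlg ℬ)
    (hcat : ∀ K ∈ 𝒟, ∀ K' ∈ 𝒟', cat K K' ∈ ℬ) (hL : L ∈ 𝒟) (hL' : L' ∈ 𝒟') {Ks Ks' : LClass A}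
    (hKs : IsCCover (BoolC 𝒟) Ks L) (hKs' : IsCCover (BoolC 𝒟') Ks' L') :
    ∃ Hs : LClass A, IsCCover ℬ Hs (cat L L') ∧
      ∀ H ∈ Hs, ∃ K ∈ Ks, ∃ K' ∈ Ks', H ⊆ cat K K' := by
  obtain ⟨F, hF, hF𝒟, hLF, hFKs⟩ := hKs.exists_finite_forall_cclass_subset hL
  obtain ⟨F', hF', hF𝒟', hLF', hFKs'⟩ := hKs'.exists_finite_forall_cclass_subset hL'
  have hGℬ : upperCats F F' L L' ⊆ ℬ := upperCats_subset h𝒟 h𝒟' hcat hF hF' hF𝒟 hF𝒟' hLF hLF'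
  refine ⟨cclass (upperCats F F' L L') '' cat L L',
    isCCover_cclass_image hℬ (finite_upperCats hF hF' L L') hGℬ _, ?_⟩
  rintro _ ⟨w, hw, rfl⟩
  obtain ⟨u, hu, v, hv, hsub⟩ := exists_cclass_upperCats_subset_cat hLF hLF' hw
  obtain ⟨K, hK, huK⟩ := hFKs u hu
  obtain ⟨K', hK', hvK'⟩ := hFKs' v hv
  exact ⟨K, hK, K', hK', hsub.trans (cat_subset_cat huK hvK')⟩

end Concatenation

/-- Weak concatenation principle for Boolean closure. -/
theorem statement7 {A : Type} [Fintype A] (𝒟 : LClass A) (hlat : LangLattice 𝒟)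
    (hcat : ∀ K L : Lang A, K ∈ 𝒟 → L ∈ 𝒟 → cat K L ∈ 𝒟)
    (L L' : Lang A) (hL : L ∈ 𝒟) (hL' : L' ∈ 𝒟)
    (Ks Ks' : LClass A)
    (hKs : IsCCover (BoolC 𝒟) Ks L) (hKs' : IsCCover (BoolC 𝒟) Ks' L') :
    ∃ Hs : LClass A, IsCCover (BoolC 𝒟) Hs (cat L L') ∧
      ∀ H ∈ Hs, ∃ K ∈ Ks, ∃ K' ∈ Ks', H ⊆ cat K K' :=
  statement7_general hlat.infClosed hlat.infClosed (langBoolAlg_boolC 𝒟)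
    (fun _ hK _ hK' => subset_boolC 𝒟 (hcat _ _ hK hK')) hL hL' hKs hKs'

end Paper
end

section
/- Let D be a lattice of languages over a finite alphabet A, let α : A* → M be a map into a finite set M, and let ρ : 2^{A*} → R be a rating map. Then the maps τ_{D,ρ} : 2^{A*} → 2^R defined by τ_{D,ρ}(K) = I_D[K, ρ], and τ_{D,α,ρ} : 2^{A*} → 2^{M×R} defined by τ_{D,α,ρ}(K) = {(s,r) : r ∈ I_D[α⁻¹(s) ∩ K, ρ]}, are both rating maps: each maps ∅ to ∅ and commutes with binary union. -/
open Set

namespace Paper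

variable {A R M : Type}

/-- The nested rating map `K ↦ I_𝒟[K, ρ]`. -/
def tauD [Add R] (𝒟 : LClass A) (ρ : Lang A → R) : Lang A → Set R :=
  fun K => optImprint 𝒟 ρ K

/-- The pointed nested rating map `K ↦ {(s, r) : r ∈ I_𝒟[α⁻¹(s) ∩ K, ρ]}`. -/
def tauDp [Add R] (𝒟 : LClass A) (α : List A → M) (ρ : Lang A → R) :
    Lang A → Set (M × R) :=
  fun K => {p | p.2 ∈ optImprint 𝒟 ρ (α ⁻¹' {p.1} ∩ K)}

section

variable {𝒟 Ks Ls : LClass A} {K L : Lang A}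

theorem isCCover_empty (𝒟 : LClass A) : IsCCover 𝒟 ∅ (∅ : Lang A) :=
  ⟨⟨Set.finite_empty, Set.empty_subset _⟩, Set.empty_subset _⟩

theorem IsCCover.mono (hKL : K ⊆ L) (hL : IsCCover 𝒟 Ks L) : IsCCover 𝒟 Ks K :=
  ⟨⟨hL.1.1, hKL.trans hL.1.2⟩, hL.2⟩

theorem IsCCover.union (hK : IsCCover 𝒟 Ks K) (hL : IsCCover 𝒟 Ls L) :
    IsCCover 𝒟 (Ks ∪ Ls) (K ∪ L) := by
  refine ⟨⟨hK.1.1.union hL.1.1, ?_⟩, Set.union_subset hK.2 hL.2⟩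
  rw [Set.sUnion_union]
  exact Set.union_subset_union hK.1.2 hL.1.2

end

section

variable [Add R] (ρ : Lang A → R)

theorem imprint_empty : imprint ρ ∅ = ∅ := by
  simp [imprint]

theorem imprint_union (Ks Ls : LClass A) :
    imprint ρ (Ks ∪ Ls) = imprint ρ Ks ∪ imprint ρ Ls := by
  ext r
  simp only [imprint, Set.mem_ofPred_eq, Set.mem_union, or_and_right, exists_or]

variable (𝒟 : LClass A)

theorem optImprint_mono {K L : Lang A} (hKL : K ⊆ L) :
    optImprint 𝒟 ρ K ⊆ optImprint 𝒟 ρ L :=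
  fun _ hr Ks hKs => hr Ks (hKs.mono hKL)

theorem optImprint_empty : optImprint 𝒟 ρ ∅ = ∅ :=
  Set.eq_empty_of_subset_empty fun _ hr => imprint_empty ρ ▸ hr ∅ (isCCover_empty 𝒟)

/- If `r` avoids the imprint of a cover of `K` and that of a cover of `L`, then it avoids the
imprint of the union of the two covers, which covers `K ∪ L`. -/
theorem optImprint_union_subset (K L : Lang A) :
    optImprint 𝒟 ρ (K ∪ L) ⊆ optImprint 𝒟 ρ K ∪ optImprint 𝒟 ρ L := by
  intro r hr
  by_contra! hnot
  simp only [optImprint, Set.mem_union, Set.mem_ofPred_eq, not_or, not_forall] at hnot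
  obtain ⟨⟨Ks, hKs, hrKs⟩, Ls, hLs, hrLs⟩ := hnot
  have hr_union : r ∈ imprint ρ Ks ∪ imprint ρ Ls :=
    imprint_union ρ Ks Ls ▸ hr (Ks ∪ Ls) (hKs.union hLs)
  exact hr_union.elim hrKs hrLs

theorem optImprint_union (K L : Lang A) :
    optImprint 𝒟 ρ (K ∪ L) = optImprint 𝒟 ρ K ∪ optImprint 𝒟 ρ L :=
  (optImprint_union_subset ρ 𝒟 K L).antisymm <| Set.union_subset
    (optImprint_mono ρ 𝒟 Set.subset_union_left) (optImprint_mono ρ 𝒟 Set.subset_union_right)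

variable (α : List A → M)

theorem tauDp_empty : tauDp 𝒟 α ρ ∅ = ∅ := by
  simp [tauDp, optImprint_empty]

theorem tauDp_union (K L : Lang A) :
    tauDp 𝒟 α ρ (K ∪ L) = tauDp 𝒟 α ρ K ∪ tauDp 𝒟 α ρ L := by
  ext ⟨s, r⟩
  simp only [tauDp, Set.inter_union_distrib_left, optImprint_union, Set.mem_ofPred_eq,
    Set.mem_union]

end

theorem statement11_general [Add R] (𝒟 : LClass A) (α : List A → M) (ρ : Lang A → R) :
    (tauD 𝒟 ρ (∅ : Lang A) = ∅ ∧
      ∀ K L : Lang A, tauD 𝒟 ρ (K ∪ L) = tauD 𝒟 ρ K ∪ tauD 𝒟 ρ L) ∧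
    (tauDp 𝒟 α ρ (∅ : Lang A) = ∅ ∧
      ∀ K L : Lang A,
        tauDp 𝒟 α ρ (K ∪ L) = tauDp 𝒟 α ρ K ∪ tauDp 𝒟 α ρ L) :=
  ⟨⟨optImprint_empty ρ 𝒟, optImprint_union ρ 𝒟⟩, tauDp_empty ρ 𝒟 α, tauDp_union ρ 𝒟 α⟩

/-- The maps `τ_{𝒟,ρ}` and `τ_{𝒟,α,ρ}` are rating maps. -/
theorem statement11 {A R M : Type} [Fintype A] [AddCommMonoid R] [Finite R]
    [Finite M] (hidem : ∀ r : R, r + r = r)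
    (𝒟 : LClass A) (hlat : LangLattice 𝒟) (α : List A → M)
    (ρ : Lang A → R) (hρ : IsRatingMap ρ) :
    (tauD 𝒟 ρ (∅ : Lang A) = ∅ ∧
      ∀ K L : Lang A, tauD 𝒟 ρ (K ∪ L) = tauD 𝒟 ρ K ∪ tauD 𝒟 ρ L) ∧
    (tauDp 𝒟 α ρ (∅ : Lang A) = ∅ ∧
      ∀ K L : Lang A,
        tauDp 𝒟 α ρ (K ∪ L) = tauDp 𝒟 α ρ K ∪ tauDp 𝒟 α ρ L) :=
  statement11_general 𝒟 α ρ

end Paper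
end

section
/- Let C be a quotient-closed lattice whose members are all regular languages, and let ρ : 2^{A*} → R be a rating map that is quasi-multiplicative for an endomorphism γ of (R,+). Then for all languages H, L ⊆ A*, all q ∈ I_C[H, ρ] and all r ∈ I_C[L, ρ], we have γ(q·r) ∈ I_C[HL, ρ]. -/
open Set

namespace Paper

variable {A R M : Type}

/-!
Let `Ks` be a `𝒞`-cover of `HL`. For each `u ∈ H` the quotients `u⁻¹K` with `K ∈ Ks` form a
`𝒞`-cover of `L`, so `r ≤ ρ(V)` for one of them, `V = u⁻¹K`, and `u` lies in the residual
`K / V = {x | xV ⊆ K}`. Hence the residuals `K / V` with `K ∈ Ks` and `r ≤ ρ(V)` cover `H`. A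
residual of `K` is an intersection of right quotients of `K`, of which a regular language has only
finitely many; so there are finitely many residuals, and all are in `𝒞`. Therefore `q ≤ ρ(K / V)`
for some such `K` and `V`, and `(K / V)V ⊆ K` gives `γ(qr) ≤ γ(ρ(K / V)ρ(V)) ≤ ρ(K)`.
-/

section CanonicalOrder

theorem rle.trans [AddSemigroup R] {a b c : R} (hab : rle a b) (hbc : rle b c) : rle a c := by
  unfold rle at *
  rw [← hbc, ← add_assoc, hab]

theorem rle.mul [NonUnitalNonAssocSemiring R] {a b c d : R} (hab : rle a b) (hcd : rle c d) :
    rle (a * c) (b * d) := by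
  have mul_left : rle (a * c) (a * d) := by unfold rle at *; rw [← mul_add, hcd]
  have mul_right : rle (a * d) (b * d) := by unfold rle at *; rw [← add_mul, hab]
  exact mul_left.trans mul_right

theorem IsAddEndo.map_rle [AddCommMonoid R] {γ : R → R} (hγ : IsAddEndo γ) {a b : R}
    (hab : rle a b) : rle (γ a) (γ b) := by
  unfold rle at *
  rw [← hγ.2, hab]

theorem IsRatingMap.rle_of_subset [AddCommMonoid R] {ρ : Lang A → R} (hρ : IsRatingMap ρ)
    {K L : Lang A} (hKL : K ⊆ L) : rle (ρ K) (ρ L) := by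
  unfold rle
  rw [← hρ.2, union_eq_self_of_subset_left hKL]

end CanonicalOrder

section Quotients

/-- The left quotient `w⁻¹K` of a language by a word. -/
def leftQuotient (w : List A) (K : Lang A) : Lang A := {u | w ++ u ∈ K}

/-- The right quotient `Kw⁻¹` of a language by a word. -/
def rightQuotient (K : Lang A) (w : List A) : Lang A := {u | u ++ w ∈ K}

/-- The right residual `K / V`, that is, the largest language `U` with `UV ⊆ K`. -/
def residual (K V : Lang A) : Lang A := {u | ∀ v ∈ V, u ++ v ∈ K}

theorem cat_residual_subset (K V : Lang A) : cat (residual K V) V ⊆ K := by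
  rintro _ ⟨u, hu, v, hv, rfl⟩
  exact hu v hv

theorem mem_residual_leftQuotient (u : List A) (K : Lang A) :
    u ∈ residual K (leftQuotient u K) :=
  fun _ hv => hv

theorem residual_eq_sInter (K V : Lang A) : residual K V = ⋂₀ (rightQuotient K '' V) := by
  ext u
  simp [residual, rightQuotient]

theorem RegularLang.finite_range_rightQuotient {K : Lang A} (hK : RegularLang K) :
    (range (rightQuotient K)).Finite := by
  obtain ⟨N, _, _, α, ⟨_, map_append⟩, F, rfl⟩ := hK
  refine (finite_range fun n : N => {u : List A | α u * n ∈ F}).subset ?_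
  rintro _ ⟨w, rfl⟩
  exact ⟨α w, by ext u; simp [rightQuotient, map_append]⟩

theorem RegularLang.finite_range_residual {K : Lang A} (hK : RegularLang K) :
    (range (residual K)).Finite := by
  refine (hK.finite_range_rightQuotient.finite_subsets.image sInter).subset ?_
  rintro _ ⟨V, rfl⟩
  exact ⟨rightQuotient K '' V, image_subset_range _ _, (residual_eq_sInter K V).symm⟩

theorem residual_mem {𝒞 : LClass A} (hinter : FiniteInter 𝒞) (hqc : QuotientClosed 𝒞)
    {K : Lang A} (hK : K ∈ 𝒞) (hreg : RegularLang K) (V : Lang A) : residual K V ∈ 𝒞 := by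
  have hfin : (rightQuotient K '' V).Finite :=
    hreg.finite_range_rightQuotient.subset (image_subset_range _ _)
  have hsub : rightQuotient K '' V ⊆ 𝒞 := image_subset_iff.2 fun w _ => (hqc K hK w).2
  rw [residual_eq_sInter]
  simpa using hinter.finiteInter_mem hfin.toFinset (by simpa using hsub)

end Quotients

section Covers

variable {𝒞 Ks : LClass A} {H L : Lang A}

theorem IsCCover.image_leftQuotient (hqc : QuotientClosed 𝒞) (hKs : IsCCover 𝒞 Ks (cat H L))
    {u : List A} (hu : u ∈ H) : IsCCover 𝒞 (leftQuotient u '' Ks) L := by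
  obtain ⟨⟨hfin, hcov⟩, hsub⟩ := hKs
  refine ⟨⟨hfin.image _, fun v hv => ?_⟩, image_subset_iff.2 fun K hK => (hqc K (hsub hK) u).1⟩
  obtain ⟨K, hK, huv⟩ := hcov ⟨u, hu, v, hv, rfl⟩
  exact ⟨_, mem_image_of_mem _ hK, huv⟩

theorem IsCCover.image2_residual [Add R] (hinter : FiniteInter 𝒞) (hqc : QuotientClosed 𝒞)
    (hreg : ∀ L ∈ 𝒞, RegularLang L) {ρ : Lang A → R} {r : R} (hr : r ∈ optImprint 𝒞 ρ L)
    (hKs : IsCCover 𝒞 Ks (cat H L)) :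
    IsCCover 𝒞 (image2 residual Ks {V | rle r (ρ V)}) H := by
  have hsub : Ks ⊆ 𝒞 := hKs.2
  refine ⟨⟨?finite, fun u hu => ?covers⟩, image2_subset_iff.2 fun K hK V _ => ?mem⟩
  case finite =>
    rw [← iUnion_image_left]
    exact hKs.1.1.biUnion fun K hK =>
      (hreg K (hsub hK)).finite_range_residual.subset (image_subset_range _ _)
  case covers =>
    obtain ⟨_, ⟨K, hK, rfl⟩, hrK⟩ := hr _ (hKs.image_leftQuotient hqc hu)
    exact ⟨_, mem_image2_of_mem hK hrK, mem_residual_leftQuotient u K⟩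
  case mem => exact residual_mem hinter hqc (hsub hK) (hreg K (hsub hK)) V

end Covers

theorem LangLattice.finiteInter {𝒞 : LClass A} (hlat : LangLattice 𝒞) : FiniteInter 𝒞 where
  univ_mem := hlat.2.1
  inter_mem _ hK _ hL := hlat.2.2.2 _ _ hK hL

theorem statement12_general [NonUnitalNonAssocSemiring R] {𝒞 : LClass A}
    (hinter : FiniteInter 𝒞) (hqc : QuotientClosed 𝒞) (hreg : ∀ L ∈ 𝒞, RegularLang L)
    {ρ : Lang A → R} (hρ : IsRatingMap ρ) {γ : R → R} (hγ : IsAddEndo γ)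
    (hcat : ∀ K L : Lang A, ρ (cat K L) = γ (ρ K * ρ L)) {H L : Lang A} {q r : R}
    (hq : q ∈ optImprint 𝒞 ρ H) (hr : r ∈ optImprint 𝒞 ρ L) :
    γ (q * r) ∈ optImprint 𝒞 ρ (cat H L) := by
  intro Ks hKs
  obtain ⟨_, ⟨K, hK, V, hrV, rfl⟩, hqU⟩ := hq _ (hKs.image2_residual hinter hqc hreg hr)
  have hqr : rle (γ (q * r)) (ρ (cat (residual K V) V)) :=
    hcat (residual K V) V ▸ hγ.map_rle (hqU.mul hrV)
  exact ⟨K, hK, hqr.trans (hρ.rle_of_subset (cat_residual_subset K V))⟩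

/-- Multiplication of optimal imprints, for quasi-multiplicative
rating maps and quotient-closed lattices of regular languages. -/
theorem statement12 {A R : Type} [Fintype A] [Semiring R] [Finite R]
    (hidem : ∀ r : R, r + r = r)
    (𝒞 : LClass A) (hlat : LangLattice 𝒞) (hqc : QuotientClosed 𝒞)
    (hreg : ∀ L ∈ 𝒞, RegularLang L)
    (ρ : Lang A → R) (hρ : IsRatingMap ρ) (γ : R → R) (hγ : IsQuasiMult ρ γ)
    (H L : Lang A) (q r : R)
    (hq : q ∈ optImprint 𝒞 ρ H) (hr : r ∈ optImprint 𝒞 ρ L) :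
    γ (q * r) ∈ optImprint 𝒞 ρ (cat H L) := by
  exact statement12_general hlat.finiteInter hqc hreg hρ hγ.1 hγ.2.2 hq hr

end Paper
end
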